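/- Let $n\ge 1$, and let $I,X,Y,Z$ denote the $2\times 2$ Pauli matrices. A $k$-qubit Pauli string is a Kronecker product of $k$ matrices from $\{I,X,Y,Z\}$ (the scalar $1$ if $k=0$), and a $k$-qubit Pauli LIM is a matrix $cQ$ with $c\in\mathbb{C}\setminus\{0\}$ and $Q$ a $k$-qubit Pauli string. Vectors $\varphi,\psi\in\mathbb{C}^{2^k}$ are called Pauli-isomorphic if $A\varphi=\psi$ for some $k$-qubit Pauli LIM $A$, and $\mathrm{Stab}(\varphi)$ denotes the set of $k$-qubit Pauli LIMs $A$ with $A\varphi=\varphi$. Let $\varphi_0,\varphi_1\in\mathbb{C}^{2^{n-1}}$ be nonzero vectors such that $\varphi_0=\varphi_1$ whenever $\varphi_0$ and $\varphi_1$ are Pauli-isomorphic. Let $\lambda\in\mathbb{C}\setminus\{0\}$, let $P$ be an $(n-1)$-qubit Pauli string, and let $B$ be an $(n-1)$-qubit Pauli LIM or $B=0$. Then the vectors $w=|0\rangle\otimes\varphi_0+|1\rangle\otimes\lambda P\varphi_1$ and $v=|0\rangle\otimes\varphi_0+|1\rangle\otimes B\varphi_1$ in $\mathbb{C}^{2^n}$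 are Pauli-isomorphic if and only if there exist $s,x\in\{0,1\}$, $g_0\in\mathrm{Stab}(\varphi_0)$ and $g_1\in\mathrm{Stab}(\varphi_1)$, with $x=0$ unless $\varphi_0=\varphi_1$, such that $$B=(-1)^s\,\lambda^{(-1)^x}\,g_0\,P\,g_1 .$$ Moreover, for any such $s,x,g_0,g_1$, the matrix $$R=(X\otimes\lambda P)^x\cdot(Z^s\otimes g_0^{-1})$$ is an $n$-qubit Pauli LIM with $Rv=w$, and hence $R^{-1}w=v$. -/

import Mathlib

noncomputable section

/-- The single-qubit Pauli matrices. -/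
def pauliI : Matrix (Fin 2) (Fin 2) ℂ := 1
def pauliX : Matrix (Fin 2) (Fin 2) ℂ := !![0, 1; 1, 0]
def pauliY : Matrix (Fin 2) (Fin 2) ℂ := !![0, -Complex.I; Complex.I, 0]
def pauliZ : Matrix (Fin 2) (Fin 2) ℂ := !![1, 0; 0, -1]

/-- Kronecker product of a `2 × 2` matrix (most significant qubit) with a
`2^m × 2^m` matrix, indexed by `Fin (2^(m+1))`. -/
def kron {m : ℕ} (A : Matrix (Fin 2) (Fin 2) ℂ) (B : Matrix (Fin (2 ^ m)) (Fin (2 ^ m)) ℂ) :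
    Matrix (Fin (2 ^ (m + 1))) (Fin (2 ^ (m + 1))) ℂ := fun i j =>
  A (if (i : ℕ) < 2 ^ m then 0 else 1) (if (j : ℕ) < 2 ^ m then 0 else 1) *
    B ⟨(i : ℕ) % 2 ^ m, Nat.mod_lt _ (pow_pos (by norm_num) m)⟩
      ⟨(j : ℕ) % 2 ^ m, Nat.mod_lt _ (pow_pos (by norm_num) m)⟩

/-- `IsPauliString n M` holds iff `M` is a Kronecker product of `n` single-qubit
Pauli matrices. -/
def IsPauliString : (n : ℕ) → Matrix (Fin (2 ^ n)) (Fin (2 ^ n)) ℂ → Prop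
  | 0, M => M = 1
  | n + 1, M => ∃ Q ∈ ({pauliI, pauliX, pauliY, pauliZ} : Set (Matrix (Fin 2) (Fin 2) ℂ)),
      ∃ B, IsPauliString n B ∧ M = kron Q B

/-- An `n`-qubit Pauli LIM: a nonzero scalar multiple of an `n`-qubit Pauli string. -/
def IsPauliLIM (n : ℕ) (A : Matrix (Fin (2 ^ n)) (Fin (2 ^ n)) ℂ) : Prop :=
  ∃ (c : ℂ) (P : Matrix (Fin (2 ^ n)) (Fin (2 ^ n)) ℂ),
    c ≠ 0 ∧ IsPauliString n P ∧ A = c • P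

/-- The stabilizer set of a vector: all `n`-qubit Pauli LIMs fixing `φ`. -/
def PauliStab {n : ℕ} (φ : Fin (2 ^ n) → ℂ) : Set (Matrix (Fin (2 ^ n)) (Fin (2 ^ n)) ℂ) :=
  {A | IsPauliLIM n A ∧ A.mulVec φ = φ}

/-- Two vectors are Pauli-isomorphic if some Pauli LIM maps one to the other. -/
def PauliIso {n : ℕ} (φ ψ : Fin (2 ^ n) → ℂ) : Prop :=
  ∃ A, IsPauliLIM n A ∧ A.mulVec φ = ψ

/-- The vector `|0⟩⊗φ₀ + |1⟩⊗φ₁`: first `2^m` coordinates are `φ₀`, last are `φ₁`. -/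
def dirac {m : ℕ} (φ₀ φ₁ : Fin (2 ^ m) → ℂ) : Fin (2 ^ (m + 1)) → ℂ := fun i =>
  if h : (i : ℕ) < 2 ^ m then φ₀ ⟨i, h⟩
  else φ₁ ⟨(i : ℕ) - 2 ^ m, by
    have h1 := i.isLt
    have h2 : (2 : ℕ) ^ (m + 1) = 2 ^ m + 2 ^ m := by rw [pow_succ]; omega
    omega⟩

/-- The high-edge label `(-1)^s · λ^((-1)^x) · g₀ · P · g₁`. -/
def highLabel {m : ℕ} (lam : ℂ) (P g₀ g₁ : Matrix (Fin (2 ^ m)) (Fin (2 ^ m)) ℂ)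
    (s x : Fin 2) : Matrix (Fin (2 ^ m)) (Fin (2 ^ m)) ℂ :=
  ((-1 : ℂ) ^ (s : ℕ) * lam ^ ((-1 : ℤ) ^ (x : ℕ))) • (g₀ * P * g₁)

/-- The root label `(X ⊗ λP)^x · (Z^s ⊗ g₀⁻¹)`. -/
def rootLabel {m : ℕ} (lam : ℂ) (P g₀ : Matrix (Fin (2 ^ m)) (Fin (2 ^ m)) ℂ)
    (s x : Fin 2) : Matrix (Fin (2 ^ (m + 1))) (Fin (2 ^ (m + 1))) ℂ :=
  kron pauliX (lam • P) ^ (x : ℕ) * kron (pauliZ ^ (s : ℕ)) g₀⁻¹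

end

open Matrix

/-- The four single-qubit Pauli matrices. -/
def pauliSet : Set (Matrix (Fin 2) (Fin 2) ℂ) := {pauliI, pauliX, pauliY, pauliZ}

/-- Splitting an index of `ℂ^(2^(m+1))` into its most significant bit and the remaining bits. -/
def qubitEquiv (m : ℕ) : Fin 2 × Fin (2 ^ m) ≃ Fin (2 ^ (m + 1)) :=
  finProdFinEquiv.trans (finCongr (by rw [pow_succ, mul_comm]))

theorem qubitEquiv_val {m : ℕ} (b : Fin 2) (i : Fin (2 ^ m)) :
    (qubitEquiv m (b, i) : ℕ) = i + 2 ^ m * b := by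
  simp [qubitEquiv]

theorem kron_qubitEquiv {m : ℕ} (A : Matrix (Fin 2) (Fin 2) ℂ)
    (B : Matrix (Fin (2 ^ m)) (Fin (2 ^ m)) ℂ) (a b : Fin 2) (i j : Fin (2 ^ m)) :
    kron A B (qubitEquiv m (a, i)) (qubitEquiv m (b, j)) = A a b * B i j := by
  have hbit : ∀ (c : Fin 2) (k : Fin (2 ^ m)),
      (if (qubitEquiv m (c, k) : ℕ) < 2 ^ m then (0 : Fin 2) else 1) = c := by
    intro c k
    rw [qubitEquiv_val]
    fin_cases c <;> simp
  have hmod : ∀ (c : Fin 2) (k : Fin (2 ^ m)), (qubitEquiv m (c, k) : ℕ) % 2 ^ m = k := by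
    intro c k
    rw [qubitEquiv_val, Nat.add_mul_mod_self_left, Nat.mod_eq_of_lt k.isLt]
  simp only [kron, hbit, hmod, Fin.eta]

theorem dirac_qubitEquiv {m : ℕ} (φ₀ φ₁ : Fin (2 ^ m) → ℂ) (b : Fin 2) (i : Fin (2 ^ m)) :
    dirac φ₀ φ₁ (qubitEquiv m (b, i)) = (![φ₀, φ₁] : Fin 2 → Fin (2 ^ m) → ℂ) b i := by
  fin_cases b
  · simp [dirac, qubitEquiv_val]
  · simp [dirac, qubitEquiv_val]

theorem dirac_inj {m : ℕ} {φ₀ φ₁ ψ₀ ψ₁ : Fin (2 ^ m) → ℂ} :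
    dirac φ₀ φ₁ = dirac ψ₀ ψ₁ ↔ φ₀ = ψ₀ ∧ φ₁ = ψ₁ := by
  refine ⟨fun h => ⟨funext fun i => ?_, funext fun i => ?_⟩, by rintro ⟨rfl, rfl⟩; rfl⟩
  · simpa [dirac_qubitEquiv] using congrFun h (qubitEquiv m (0, i))
  · simpa [dirac_qubitEquiv] using congrFun h (qubitEquiv m (1, i))

theorem kron_mul_kron {m : ℕ} (A C : Matrix (Fin 2) (Fin 2) ℂ)
    (B D : Matrix (Fin (2 ^ m)) (Fin (2 ^ m)) ℂ) :
    kron A B * kron C D = kron (A * C) (B * D) := by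
  ext i j
  obtain ⟨⟨a, i⟩, rfl⟩ := (qubitEquiv m).surjective i
  obtain ⟨⟨b, j⟩, rfl⟩ := (qubitEquiv m).surjective j
  rw [kron_qubitEquiv, Matrix.mul_apply, ← (qubitEquiv m).sum_comp, Fintype.sum_prod_type]
  simp only [kron_qubitEquiv, Matrix.mul_apply, Finset.sum_mul_sum]
  exact Finset.sum_congr rfl fun _ _ => Finset.sum_congr rfl fun _ _ => by ring

theorem kron_one_one {m : ℕ} : kron (1 : Matrix (Fin 2) (Fin 2) ℂ)
    (1 : Matrix (Fin (2 ^ m)) (Fin (2 ^ m)) ℂ) = 1 := by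
  ext i j
  obtain ⟨⟨a, i⟩, rfl⟩ := (qubitEquiv m).surjective i
  obtain ⟨⟨b, j⟩, rfl⟩ := (qubitEquiv m).surjective j
  rw [kron_qubitEquiv]
  simp only [Matrix.one_apply, (qubitEquiv m).apply_eq_iff_eq, Prod.mk.injEq]
  split_ifs <;> simp_all

theorem smul_kron {m : ℕ} (c : ℂ) (A : Matrix (Fin 2) (Fin 2) ℂ)
    (B : Matrix (Fin (2 ^ m)) (Fin (2 ^ m)) ℂ) : kron (c • A) B = c • kron A B := by
  ext i j
  simp [kron, mul_assoc]

theorem kron_smul {m : ℕ} (c : ℂ) (A : Matrix (Fin 2) (Fin 2) ℂ)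
    (B : Matrix (Fin (2 ^ m)) (Fin (2 ^ m)) ℂ) : kron A (c • B) = c • kron A B := by
  ext i j
  simp [kron, mul_left_comm]

theorem kron_mulVec_dirac {m : ℕ} (A : Matrix (Fin 2) (Fin 2) ℂ)
    (B : Matrix (Fin (2 ^ m)) (Fin (2 ^ m)) ℂ) (φ₀ φ₁ : Fin (2 ^ m) → ℂ) :
    kron A B *ᵥ dirac φ₀ φ₁ =
      dirac (A 0 0 • (B *ᵥ φ₀) + A 0 1 • (B *ᵥ φ₁)) (A 1 0 • (B *ᵥ φ₀) + A 1 1 • (B *ᵥ φ₁)) := by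
  ext i
  obtain ⟨⟨a, i⟩, rfl⟩ := (qubitEquiv m).surjective i
  rw [dirac_qubitEquiv, Matrix.mulVec, dotProduct, ← (qubitEquiv m).sum_comp,
    Fintype.sum_prod_type]
  simp only [kron_qubitEquiv, dirac_qubitEquiv, Fin.sum_univ_two]
  fin_cases a <;> simp [Matrix.mulVec, dotProduct, Finset.mul_sum, mul_assoc]

theorem pauliSet_mul_self {Q : Matrix (Fin 2) (Fin 2) ℂ} (hQ : Q ∈ pauliSet) : Q * Q = 1 := by
  rcases hQ with rfl | rfl | rfl | rfl <;>
    simp [pauliI, pauliX, pauliY, pauliZ, Matrix.one_fin_two]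

theorem pauliSet_mul {Q R : Matrix (Fin 2) (Fin 2) ℂ} (hQ : Q ∈ pauliSet) (hR : R ∈ pauliSet) :
    ∃ c : ℂ, c ≠ 0 ∧ ∃ S ∈ pauliSet, Q * R = c • S := by
  have hI := Complex.I_ne_zero
  have mI : pauliI ∈ pauliSet := by simp [pauliSet]
  have mX : pauliX ∈ pauliSet := by simp [pauliSet]
  have mY : pauliY ∈ pauliSet := by simp [pauliSet]
  have mZ : pauliZ ∈ pauliSet := by simp [pauliSet]
  have hsq := pauliSet_mul_self hQ
  rcases hQ with rfl | rfl | rfl | rfl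
  · exact ⟨1, one_ne_zero, R, hR, by simp [pauliI]⟩
  · rcases hR with rfl | rfl | rfl | rfl
    · exact ⟨1, one_ne_zero, _, mX, by simp [pauliI]⟩
    · exact ⟨1, one_ne_zero, _, mI, by rw [hsq, one_smul, pauliI]⟩
    · exact ⟨Complex.I, hI, _, mZ, by simp [pauliX, pauliY, pauliZ]⟩
    · exact ⟨-Complex.I, neg_ne_zero.2 hI, _, mY, by simp [pauliX, pauliY, pauliZ]⟩
  · rcases hR with rfl | rfl | rfl | rfl
    · exact ⟨1, one_ne_zero, _, mY, by simp [pauliI]⟩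
    · exact ⟨-Complex.I, neg_ne_zero.2 hI, _, mZ, by simp [pauliX, pauliY, pauliZ]⟩
    · exact ⟨1, one_ne_zero, _, mI, by rw [hsq, one_smul, pauliI]⟩
    · exact ⟨Complex.I, hI, _, mX, by simp [pauliX, pauliY, pauliZ]⟩
  · rcases hR with rfl | rfl | rfl | rfl
    · exact ⟨1, one_ne_zero, _, mZ, by simp [pauliI]⟩
    · exact ⟨Complex.I, hI, _, mY, by simp [pauliX, pauliY, pauliZ]⟩
    · exact ⟨-Complex.I, neg_ne_zero.2 hI, _, mX, by simp [pauliX, pauliY, pauliZ]⟩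
    · exact ⟨1, one_ne_zero, _, mI, by rw [hsq, one_smul, pauliI]⟩

theorem IsPauliString.mul_self {n : ℕ} {P : Matrix (Fin (2 ^ n)) (Fin (2 ^ n)) ℂ}
    (hP : IsPauliString n P) : P * P = 1 := by
  induction n with
  | zero => rw [show P = 1 from hP, one_mul]
  | succ n ih =>
    obtain ⟨Q, hQ, B, hB, rfl⟩ := hP
    rw [kron_mul_kron, pauliSet_mul_self hQ, ih hB, kron_one_one]

theorem IsPauliString.isPauliLIM {n : ℕ} {P : Matrix (Fin (2 ^ n)) (Fin (2 ^ n)) ℂ}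
    (hP : IsPauliString n P) : IsPauliLIM n P :=
  ⟨1, P, one_ne_zero, hP, (one_smul _ _).symm⟩

theorem IsPauliLIM.smul {n : ℕ} {A : Matrix (Fin (2 ^ n)) (Fin (2 ^ n)) ℂ}
    (hA : IsPauliLIM n A) {c : ℂ} (hc : c ≠ 0) : IsPauliLIM n (c • A) := by
  obtain ⟨d, P, hd, hP, rfl⟩ := hA
  exact ⟨c * d, P, mul_ne_zero hc hd, hP, smul_smul _ _ _⟩

theorem IsPauliLIM.kron {n : ℕ} {Q : Matrix (Fin 2) (Fin 2) ℂ} (hQ : Q ∈ pauliSet)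
    {A : Matrix (Fin (2 ^ n)) (Fin (2 ^ n)) ℂ} (hA : IsPauliLIM n A) :
    IsPauliLIM (n + 1) (kron Q A) := by
  obtain ⟨c, P, hc, hP, rfl⟩ := hA
  exact ⟨c, _, hc, ⟨Q, hQ, P, hP, rfl⟩, kron_smul _ _ _⟩

theorem IsPauliString.mul {n : ℕ} {P Q : Matrix (Fin (2 ^ n)) (Fin (2 ^ n)) ℂ}
    (hP : IsPauliString n P) (hQ : IsPauliString n Q) : IsPauliLIM n (P * Q) := by
  induction n with
  | zero =>
    have h : P * Q = 1 := by rw [show P = 1 from hP, show Q = 1 from hQ, one_mul]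
    exact IsPauliString.isPauliLIM (n := 0) h
  | succ n ih =>
    obtain ⟨S, hS, B, hB, rfl⟩ := hP
    obtain ⟨T, hT, C, hC, rfl⟩ := hQ
    obtain ⟨c, hc, U, hU, hST⟩ := pauliSet_mul hS hT
    rw [kron_mul_kron, hST, smul_kron]
    exact ((ih hB hC).kron hU).smul hc

theorem IsPauliLIM.mul {n : ℕ} {A B : Matrix (Fin (2 ^ n)) (Fin (2 ^ n)) ℂ}
    (hA : IsPauliLIM n A) (hB : IsPauliLIM n B) : IsPauliLIM n (A * B) := by
  obtain ⟨c, P, hc, hP, rfl⟩ := hA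
  obtain ⟨d, Q, hd, hQ, rfl⟩ := hB
  rw [Matrix.smul_mul, Matrix.mul_smul]
  exact ((hP.mul hQ).smul hd).smul hc

theorem IsPauliLIM.isUnit_det {n : ℕ} {A : Matrix (Fin (2 ^ n)) (Fin (2 ^ n)) ℂ}
    (hA : IsPauliLIM n A) : IsUnit A.det := by
  obtain ⟨c, P, hc, hP, rfl⟩ := hA
  refine Matrix.isUnit_det_of_left_inverse (B := c⁻¹ • P) ?_
  rw [Matrix.smul_mul, Matrix.mul_smul, hP.mul_self, smul_smul, inv_mul_cancel₀ hc, one_smul]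

theorem IsPauliLIM.inv {n : ℕ} {A : Matrix (Fin (2 ^ n)) (Fin (2 ^ n)) ℂ}
    (hA : IsPauliLIM n A) : IsPauliLIM n A⁻¹ := by
  obtain ⟨c, P, hc, hP, rfl⟩ := hA
  refine ⟨c⁻¹, P, inv_ne_zero hc, hP, Matrix.inv_eq_left_inv ?_⟩
  rw [Matrix.smul_mul, Matrix.mul_smul, hP.mul_self, smul_smul, inv_mul_cancel₀ hc, one_smul]

theorem IsPauliLIM.inv_mulVec_eq {n : ℕ} {A : Matrix (Fin (2 ^ n)) (Fin (2 ^ n)) ℂ}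
    (hA : IsPauliLIM n A) {φ ψ : Fin (2 ^ n) → ℂ} (h : A *ᵥ φ = ψ) : A⁻¹ *ᵥ ψ = φ := by
  rw [← h, Matrix.mulVec_mulVec, Matrix.nonsing_inv_mul _ hA.isUnit_det, Matrix.one_mulVec]

theorem IsPauliLIM.mulVec_ne_zero {n : ℕ} {A : Matrix (Fin (2 ^ n)) (Fin (2 ^ n)) ℂ}
    (hA : IsPauliLIM n A) {φ : Fin (2 ^ n) → ℂ} (hφ : φ ≠ 0) : A *ᵥ φ ≠ 0 := by
  intro h
  apply hφ
  rw [← hA.inv_mulVec_eq h, Matrix.mulVec_zero]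

theorem PauliIso.symm {n : ℕ} {φ ψ : Fin (2 ^ n) → ℂ} (h : PauliIso φ ψ) : PauliIso ψ φ := by
  obtain ⟨A, hA, hAφ⟩ := h
  exact ⟨A⁻¹, hA.inv, hA.inv_mulVec_eq hAφ⟩

/-- Two Pauli LIMs that agree on `φ` differ by a right factor in the stabilizer of `φ`; the case
`B = 0` is excluded by `φ ≠ 0`. -/
theorem exists_mem_pauliStab_mul_eq {n : ℕ} {L B : Matrix (Fin (2 ^ n)) (Fin (2 ^ n)) ℂ}
    {φ : Fin (2 ^ n) → ℂ} (hφ : φ ≠ 0) (hL : IsPauliLIM n L) (hB : B = 0 ∨ IsPauliLIM n B)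
    (h : B *ᵥ φ = L *ᵥ φ) : ∃ g ∈ PauliStab φ, B = L * g := by
  rcases hB with rfl | hB
  · exact absurd (by rw [← h, Matrix.zero_mulVec]) (hL.mulVec_ne_zero hφ)
  · refine ⟨L⁻¹ * B, ⟨hL.inv.mul hB, ?_⟩, ?_⟩
    · rw [← Matrix.mulVec_mulVec, h]
      exact hL.inv_mulVec_eq rfl
    · rw [← Matrix.mul_assoc, Matrix.mul_nonsing_inv _ hL.isUnit_det, Matrix.one_mul]

theorem highLabel_coeff_ne_zero {lam : ℂ} (hlam : lam ≠ 0) (s x : Fin 2) :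
    (-1 : ℂ) ^ (s : ℕ) * lam ^ ((-1 : ℤ) ^ (x : ℕ)) ≠ 0 :=
  mul_ne_zero (pow_ne_zero _ (by norm_num)) (zpow_ne_zero _ hlam)

theorem exists_eq_highLabel {m : ℕ} {φ₀ φ₁ : Fin (2 ^ m) → ℂ} (h₁ : φ₁ ≠ 0)
    {lam : ℂ} (hlam : lam ≠ 0) {P B g₀ : Matrix (Fin (2 ^ m)) (Fin (2 ^ m)) ℂ}
    (hP : IsPauliString m P) (hB : B = 0 ∨ IsPauliLIM m B) (hg₀ : g₀ ∈ PauliStab φ₀) (s x : Fin 2)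
    (h : B *ᵥ φ₁ = ((-1 : ℂ) ^ (s : ℕ) * lam ^ ((-1 : ℤ) ^ (x : ℕ))) • ((g₀ * P) *ᵥ φ₁)) :
    ∃ g₁ ∈ PauliStab φ₁, B = highLabel lam P g₀ g₁ s x := by
  obtain ⟨g₁, hg₁, hBg⟩ := exists_mem_pauliStab_mul_eq h₁
    ((hg₀.1.mul hP.isPauliLIM).smul (highLabel_coeff_ne_zero hlam s x)) hB
    (by rw [h, Matrix.smul_mulVec])
  exact ⟨g₁, hg₁, by rw [hBg, highLabel, Matrix.smul_mul]⟩

theorem pauliZ_pow_mem (s : Fin 2) : pauliZ ^ (s : ℕ) ∈ pauliSet := by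
  fin_cases s <;> simp [pauliSet, pauliI]

theorem isPauliLIM_rootLabel {m : ℕ} {lam : ℂ} (hlam : lam ≠ 0)
    {P g₀ : Matrix (Fin (2 ^ m)) (Fin (2 ^ m)) ℂ} (hP : IsPauliString m P)
    (hg₀ : IsPauliLIM m g₀) (s x : Fin 2) : IsPauliLIM (m + 1) (rootLabel lam P g₀ s x) := by
  have hZ := hg₀.inv.kron (pauliZ_pow_mem s)
  have hX : IsPauliLIM (m + 1) (kron pauliX (lam • P)) :=
    (hP.isPauliLIM.smul hlam).kron (by simp [pauliSet])
  unfold rootLabel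
  fin_cases x
  · simpa using hZ
  · simpa using hX.mul hZ

theorem kron_pauliX_mulVec_dirac {m : ℕ} (A : Matrix (Fin (2 ^ m)) (Fin (2 ^ m)) ℂ)
    (φ₀ φ₁ : Fin (2 ^ m) → ℂ) : kron pauliX A *ᵥ dirac φ₀ φ₁ = dirac (A *ᵥ φ₁) (A *ᵥ φ₀) := by
  simp [kron_mulVec_dirac, pauliX]

theorem kron_pauliZ_pow_mulVec_dirac {m : ℕ} (A : Matrix (Fin (2 ^ m)) (Fin (2 ^ m)) ℂ)
    (s : Fin 2) (φ₀ φ₁ : Fin (2 ^ m) → ℂ) :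
    kron (pauliZ ^ (s : ℕ)) A *ᵥ dirac φ₀ φ₁ =
      dirac (A *ᵥ φ₀) ((-1 : ℂ) ^ (s : ℕ) • (A *ᵥ φ₁)) := by
  fin_cases s <;> simp [kron_mulVec_dirac, pauliZ]

theorem rootLabel_mulVec {m : ℕ} {φ₀ φ₁ : Fin (2 ^ m) → ℂ} {lam : ℂ} (hlam : lam ≠ 0)
    {P g₀ g₁ : Matrix (Fin (2 ^ m)) (Fin (2 ^ m)) ℂ} (hP : IsPauliString m P) {s x : Fin 2}
    (hg₀ : g₀ ∈ PauliStab φ₀) (hg₁ : g₁ ∈ PauliStab φ₁) (hx : φ₀ ≠ φ₁ → x = 0) :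
    rootLabel lam P g₀ s x *ᵥ dirac φ₀ (highLabel lam P g₀ g₁ s x *ᵥ φ₁) =
      dirac φ₀ ((lam • P) *ᵥ φ₁) := by
  have hlabel : (-1 : ℂ) ^ (s : ℕ) • (g₀⁻¹ *ᵥ (highLabel lam P g₀ g₁ s x *ᵥ φ₁)) =
      lam ^ ((-1 : ℤ) ^ (x : ℕ)) • (P *ᵥ φ₁) := by
    rw [highLabel, Matrix.smul_mulVec, Matrix.mulVec_smul, ← Matrix.mulVec_mulVec, hg₁.2,
      ← Matrix.mulVec_mulVec, hg₀.1.inv_mulVec_eq rfl, smul_smul, ← mul_assoc, ← mul_pow]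
    simp
  rw [rootLabel, ← Matrix.mulVec_mulVec, kron_pauliZ_pow_mulVec_dirac, hlabel,
    hg₀.1.inv_mulVec_eq hg₀.2]
  obtain rfl | rfl : x = 0 ∨ x = 1 := by omega
  · simp [Matrix.smul_mulVec]
  · obtain rfl : φ₀ = φ₁ := by
      by_contra hne
      exact absurd (hx hne) (by decide)
    simp [kron_pauliX_mulVec_dirac, Matrix.smul_mulVec, Matrix.mulVec_smul, hP.mul_self,
      smul_smul, hlam]

theorem exists_highLabel_of_pauliIso {m : ℕ} {φ₀ φ₁ : Fin (2 ^ m) → ℂ} (h₁ : φ₁ ≠ 0)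
    (hmerged : PauliIso φ₀ φ₁ → φ₀ = φ₁) {lam : ℂ} (hlam : lam ≠ 0)
    {P B : Matrix (Fin (2 ^ m)) (Fin (2 ^ m)) ℂ} (hP : IsPauliString m P)
    (hB : B = 0 ∨ IsPauliLIM m B)
    (h : PauliIso (dirac φ₀ ((lam • P) *ᵥ φ₁)) (dirac φ₀ (B *ᵥ φ₁))) :
    ∃ (s x : Fin 2) (g₀ g₁ : Matrix (Fin (2 ^ m)) (Fin (2 ^ m)) ℂ),
      g₀ ∈ PauliStab φ₀ ∧ g₁ ∈ PauliStab φ₁ ∧ (φ₀ ≠ φ₁ → x = 0) ∧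
      B = highLabel lam P g₀ g₁ s x := by
  obtain ⟨-, ⟨c, -, hc, ⟨Q, hQ, S, hS, rfl⟩, rfl⟩, hA⟩ := h
  have diagonal : ∀ s : Fin 2, Q = pauliZ ^ (s : ℕ) →
      ∃ (s x : Fin 2) (g₀ g₁ : Matrix (Fin (2 ^ m)) (Fin (2 ^ m)) ℂ),
        g₀ ∈ PauliStab φ₀ ∧ g₁ ∈ PauliStab φ₁ ∧ (φ₀ ≠ φ₁ → x = 0) ∧
        B = highLabel lam P g₀ g₁ s x := by
    rintro s rfl
    rw [← kron_smul, kron_pauliZ_pow_mulVec_dirac, dirac_inj] at hA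
    have hg₀ : c • S ∈ PauliStab φ₀ := ⟨hS.isPauliLIM.smul hc, hA.1⟩
    obtain ⟨g₁, hg₁, hBg⟩ := exists_eq_highLabel h₁ hlam hP hB hg₀ s 0 (by
      rw [← hA.2, Matrix.smul_mulVec lam, Matrix.mulVec_smul, Matrix.mulVec_mulVec, smul_smul]
      simp)
    exact ⟨s, 0, _, g₁, hg₀, hg₁, fun _ => rfl, hBg⟩
  have antidiagonal : ∀ (s : Fin 2) (q : ℂ), q ≠ 0 → Q = !![0, q; (-1) ^ (s : ℕ) * q, 0] →
      ∃ (s x : Fin 2) (g₀ g₁ : Matrix (Fin (2 ^ m)) (Fin (2 ^ m)) ℂ),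
        g₀ ∈ PauliStab φ₀ ∧ g₁ ∈ PauliStab φ₁ ∧ (φ₀ ≠ φ₁ → x = 0) ∧
        B = highLabel lam P g₀ g₁ s x := by
    rintro s q hq rfl
    rw [← kron_smul, kron_mulVec_dirac, dirac_inj] at hA
    have hLIM : IsPauliLIM m ((q * c * lam) • (S * P)) :=
      (hS.mul hP).smul (mul_ne_zero (mul_ne_zero hq hc) hlam)
    have hfix : ((q * c * lam) • (S * P)) *ᵥ φ₁ = φ₀ := by
      rw [← hA.1]
      simp [Matrix.smul_mulVec, Matrix.mulVec_smul, smul_smul, mul_assoc, mul_comm c lam]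
    obtain rfl := hmerged (PauliIso.symm ⟨_, hLIM, hfix⟩)
    have hg₀ : (q * c * lam) • (S * P) ∈ PauliStab φ₀ := ⟨hLIM, hfix⟩
    obtain ⟨g₁, hg₁, hBg⟩ := exists_eq_highLabel h₁ hlam hP hB hg₀ s 1 (by
      rw [← hA.2, Matrix.smul_mul, Matrix.mul_assoc, hP.mul_self, Matrix.mul_one]
      simp [Matrix.smul_mulVec, smul_smul]
      field_simp)
    exact ⟨s, 1, _, g₁, hg₀, hg₁, fun hne => absurd rfl hne, hBg⟩
  rcases hQ with rfl | rfl | rfl | rfl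
  · exact diagonal 0 (by simp [pauliI])
  · exact antidiagonal 0 1 one_ne_zero (by simp [pauliX])
  · exact antidiagonal 1 (-Complex.I) (neg_ne_zero.2 Complex.I_ne_zero) (by simp [pauliY])
  · exact diagonal 1 (by simp)

/-- Characterization of the eligible high-edge labels of an `n`-qubit node, with `n = m + 1`. -/
theorem eligible_high_edge_labels (m : ℕ)
    (φ₀ φ₁ : Fin (2 ^ m) → ℂ) (h₀ : φ₀ ≠ 0) (h₁ : φ₁ ≠ 0)
    (hmerged : PauliIso φ₀ φ₁ → φ₀ = φ₁)
    (lam : ℂ) (hlam : lam ≠ 0)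
    (P : Matrix (Fin (2 ^ m)) (Fin (2 ^ m)) ℂ) (hP : IsPauliString m P)
    (B : Matrix (Fin (2 ^ m)) (Fin (2 ^ m)) ℂ) (hB : B = 0 ∨ IsPauliLIM m B) :
    (PauliIso (dirac φ₀ ((lam • P).mulVec φ₁)) (dirac φ₀ (B.mulVec φ₁)) ↔
      ∃ (s x : Fin 2) (g₀ g₁ : Matrix (Fin (2 ^ m)) (Fin (2 ^ m)) ℂ),
        g₀ ∈ PauliStab φ₀ ∧ g₁ ∈ PauliStab φ₁ ∧ (φ₀ ≠ φ₁ → x = 0) ∧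
        B = highLabel lam P g₀ g₁ s x) ∧
    (∀ (s x : Fin 2) (g₀ g₁ : Matrix (Fin (2 ^ m)) (Fin (2 ^ m)) ℂ),
        g₀ ∈ PauliStab φ₀ → g₁ ∈ PauliStab φ₁ → (φ₀ ≠ φ₁ → x = 0) →
        B = highLabel lam P g₀ g₁ s x →
        IsPauliLIM (m + 1) (rootLabel lam P g₀ s x) ∧
        (rootLabel lam P g₀ s x).mulVec (dirac φ₀ (B.mulVec φ₁)) =
          dirac φ₀ ((lam • P).mulVec φ₁) ∧
        (rootLabel lam P g₀ s x)⁻¹.mulVec (dirac φ₀ ((lam • P).mulVec φ₁)) =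
          dirac φ₀ (B.mulVec φ₁)) := by
  have hroot : ∀ (s x : Fin 2) (g₀ g₁ : Matrix (Fin (2 ^ m)) (Fin (2 ^ m)) ℂ),
      g₀ ∈ PauliStab φ₀ → g₁ ∈ PauliStab φ₁ → (φ₀ ≠ φ₁ → x = 0) →
      B = highLabel lam P g₀ g₁ s x →
      IsPauliLIM (m + 1) (rootLabel lam P g₀ s x) ∧
      (rootLabel lam P g₀ s x).mulVec (dirac φ₀ (B.mulVec φ₁)) =
        dirac φ₀ ((lam • P).mulVec φ₁) ∧
      (rootLabel lam P g₀ s x)⁻¹.mulVec (dirac φ₀ ((lam • P).mulVec φ₁)) =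
        dirac φ₀ (B.mulVec φ₁) := by
    rintro s x g₀ g₁ hg₀ hg₁ hx rfl
    have hR := isPauliLIM_rootLabel hlam hP hg₀.1 s x
    have hmap := rootLabel_mulVec hlam hP (s := s) hg₀ hg₁ hx
    exact ⟨hR, hmap, hR.inv_mulVec_eq hmap⟩
  refine ⟨⟨exists_highLabel_of_pauliIso h₁ hmerged hlam hP hB, ?_⟩, hroot⟩
  rintro ⟨s, x, g₀, g₁, hg₀, hg₁, hx, hBg⟩
  obtain ⟨hR, -, hinv⟩ := hroot s x g₀ g₁ hg₀ hg₁ hx hBg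
  exact ⟨_, hR.inv, hinv⟩
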